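/- arXiv:1505.08162 — 8 statements merged into one kernel-verified Lean document; each statement's English description precedes it below -/
import Mathlib

section
/- Let P be a finite poset and let R ⊆ Inc(P). Then R is reversible if and only if R contains no alternating cycle. -/
/-!
A linear extension `L` reversing `R` cannot meet an alternating cycle: going around the cycle,
`x_i ≤ y_{i+1} < x_{i+1}` in `L`, so `x_0 ≤ x_{k-1} ≤ y_0` in `L`, against `y_0 < x_0`.

Conversely, call `q` a successor of `p` when `p, q ∈ R` and `p.1 ≤ q.2` in the poset. Adding to the
order the relations `y ≤ x` for `(x, y) ∈ R` and closing transitively gives the relation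
`ReversalOrder`: `a` is below `b` if `a ≤ b` in the poset, or if `a ≤ p.2` and `q.1 ≤ b` for some
pairs `p`, `q` of `R` joined by a chain of successors. A failure of antisymmetry produces a closed
chain of successors, which is an alternating cycle (`hasAltCycle_of_chain`); chains of length one
are excluded because the pairs of `R` are incomparable. Hence, without alternating cycles,
`ReversalOrder` is a partial order, and any linear order extending it reverses `R`.
-/

/-- `L` is a linear extension of the partial order relation `r`:
a linear order on the ground set extending `r`. -/
def IsLinExt {α : Type*} (r : α → α → Prop) (L : α → α → Prop) : Prop :=
  IsLinearOrder α L ∧ ∀ x y : α, r x y → L x y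

/-- `Ls` is a realizer of size `t` of the partial order relation `r`. -/
def IsRealizer {α : Type*} (r : α → α → Prop) {t : ℕ} (Ls : Fin t → (α → α → Prop)) : Prop :=
  (∀ j, IsLinExt r (Ls j)) ∧ ∀ x y : α, r x y ↔ ∀ j, Ls j x y

/-- The poset with order relation `r` has a realizer of size `t`,
i.e. its dimension is at most `t`. -/
def HasDimLE {α : Type*} (r : α → α → Prop) (t : ℕ) : Prop :=
  ∃ Ls : Fin t → (α → α → Prop), IsRealizer r Ls

/-- `x` and `y` are incomparable in the partial order `r`. -/
def Incomp {α : Type*} (r : α → α → Prop) (x y : α) : Prop :=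
  ¬ r x y ∧ ¬ r y x

/-- A set `R` of ordered pairs of incomparable elements is reversible when there
is a linear extension `L` of `r` with `x > y` in `L` for every `(x, y) ∈ R`. -/
def Reversible {α : Type*} (r : α → α → Prop) (R : Set (α × α)) : Prop :=
  ∃ L : α → α → Prop, IsLinExt r L ∧ ∀ p ∈ R, L p.2 p.1 ∧ p.1 ≠ p.2

/-- `R` contains an alternating cycle: pairs `(x₀,y₀),…,(x_{k-1},y_{k-1})` in `R`
with `k ≥ 2` and `x_i ≤ y_{i+1}` in `r` cyclically. -/
def HasAltCycle {α : Type*} (r : α → α → Prop) (R : Set (α × α)) : Prop :=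
  ∃ (k : ℕ) (p : ℕ → α × α), 2 ≤ k ∧ (∀ i < k, p i ∈ R) ∧
    ∀ i < k, r (p i).1 (p ((i + 1) % k)).2

/-- `q` may follow `p` in an alternating cycle contained in `R`. -/
def AltStep {α : Type*} (r : α → α → Prop) (R : Set (α × α)) (p q : α × α) : Prop :=
  p ∈ R ∧ q ∈ R ∧ r p.1 q.2

/-- The transitive closure of the order `r` together with the reversed pairs `(y, x)`,
`(x, y) ∈ R`, with the successive uses of reversed pairs recorded as a chain in `R`. -/
def ReversalOrder {α : Type*} (r : α → α → Prop) (R : Set (α × α)) (a b : α) : Prop :=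
  r a b ∨ ∃ p q, p ∈ R ∧ q ∈ R ∧ r a p.2 ∧ Relation.ReflTransGen (AltStep r R) p q ∧ r q.1 b

lemma exists_seq_of_reflTransGen {β : Type*} {s : β → β → Prop} {p q : β}
    (h : Relation.ReflTransGen s p q) :
    ∃ (n : ℕ) (f : ℕ → β), f 0 = p ∧ f n = q ∧ ∀ i < n, s (f i) (f (i + 1)) := by
  induction h using Relation.ReflTransGen.head_induction_on with
  | refl => exact ⟨0, fun _ => q, rfl, rfl, by simp⟩
  | @head a c hac _ ih =>
    obtain ⟨n, f, h0, hn, hf⟩ := ih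
    refine ⟨n + 1, fun i => Nat.casesOn i a f, rfl, hn, ?_⟩
    rintro (_ | i) hi
    · simpa [h0] using hac
    · exact hf i (by omega)

/-- A chain of successors from `p` to `q` that closes up is an alternating cycle. -/
lemma hasAltCycle_of_chain {α : Type*} {r : α → α → Prop} {R : Set (α × α)}
    (hR : ∀ p ∈ R, Incomp r p.1 p.2) {p q : α × α} (hp : p ∈ R) (hq : q ∈ R)
    (h : Relation.ReflTransGen (AltStep r R) p q) (hqp : r q.1 p.2) : HasAltCycle r R := by
  obtain ⟨n, f, h0, hn, hf⟩ := exists_seq_of_reflTransGen h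
  have hn0 : n ≠ 0 := by
    rintro rfl
    have hpq : p = q := h0.symm.trans hn
    subst hpq
    exact (hR p hp).1 hqp
  refine ⟨n + 1, f, by omega, fun i hi => ?_, fun i hi => ?_⟩
  · rcases Nat.lt_succ_iff_lt_or_eq.1 hi with hlt | rfl
    · exact (hf i hlt).1
    · rwa [hn]
  · rcases Nat.lt_succ_iff_lt_or_eq.1 hi with hlt | rfl
    · rw [Nat.mod_eq_of_lt (by omega)]
      exact (hf i hlt).2.2
    · rwa [Nat.mod_self, hn, h0]

lemma isPartialOrder_reversalOrder {α : Type*} {r : α → α → Prop} (hr : IsPartialOrder α r)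
    {R : Set (α × α)} (hR : ∀ p ∈ R, Incomp r p.1 p.2) (hc : ¬ HasAltCycle r R) :
    IsPartialOrder α (ReversalOrder r R) where
  refl a := Or.inl (refl_of r a)
  trans a b c := by
    rintro (hab | ⟨p, q, hp, hq, hap, hpq, hqb⟩) (hbc | ⟨p', q', hp', hq', hbp, hpq', hqc⟩)
    · exact Or.inl (trans_of r hab hbc)
    · exact Or.inr ⟨p', q', hp', hq', trans_of r hab hbp, hpq', hqc⟩
    · exact Or.inr ⟨p, q, hp, hq, hap, hpq, trans_of r hqb hbc⟩
    · exact Or.inr ⟨p, q', hp, hq', hap,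
        (hpq.tail ⟨hq, hp', trans_of r hqb hbp⟩).trans hpq', hqc⟩
  antisymm a b := by
    rintro (hab | ⟨p, q, hp, hq, hap, hpq, hqb⟩) (hba | ⟨p', q', hp', hq', hbp, hpq', hqa⟩)
    · exact antisymm_of r hab hba
    · exact (hc (hasAltCycle_of_chain hR hp' hq' hpq'
        (trans_of r hqa (trans_of r hab hbp)))).elim
    · exact (hc (hasAltCycle_of_chain hR hp hq hpq
        (trans_of r hqb (trans_of r hba hap)))).elim
    · exact (hc (hasAltCycle_of_chain hR hp hq'
        ((hpq.tail ⟨hq, hp', trans_of r hqb hbp⟩).trans hpq') (trans_of r hqa hap))).elim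

/-- A set `R ⊆ Inc(P)` is reversible if and only if it contains
no alternating cycle. -/
theorem reversible_iff_no_alternating_cycle {α : Type*} [Fintype α]
    (r : α → α → Prop) (hr : IsPartialOrder α r)
    (R : Set (α × α)) (hR : ∀ p ∈ R, Incomp r p.1 p.2) :
    Reversible r R ↔ ¬ HasAltCycle r R := by
  constructor
  · rintro ⟨L, ⟨hL, hext⟩, hrev⟩ ⟨k, p, hk, hpR, hcyc⟩
    have hle : ∀ i < k, L (p 0).1 (p i).1 := by
      intro i
      induction i with
      | zero => exact fun _ => refl_of L _
      | succ i ih =>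
        intro hi
        have hstep := hcyc i (by omega)
        rw [Nat.mod_eq_of_lt hi] at hstep
        exact trans_of L (ih (by omega))
          (trans_of L (hext _ _ hstep) (hrev _ (hpR _ hi)).1)
    have hlast := hcyc (k - 1) (by omega)
    rw [Nat.sub_add_cancel (by omega), Nat.mod_self] at hlast
    obtain ⟨hlt, hne⟩ := hrev _ (hpR 0 (by omega))
    exact hne (antisymm_of L (trans_of L (hle (k - 1) (by omega)) (hext _ _ hlast)) hlt)
  · intro hc
    have := isPartialOrder_reversalOrder hr hR hc
    obtain ⟨L, hL, hsub⟩ := extend_partialOrder (ReversalOrder r R)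
    refine ⟨L, ⟨hL, fun x y hxy => hsub _ _ (Or.inl hxy)⟩, fun p hp => ⟨hsub _ _ ?_, ?_⟩⟩
    · exact Or.inr ⟨p, p, hp, hp, refl_of r _, .refl, refl_of r _⟩
    · intro heq
      exact (hR p hp).1 (heq ▸ refl_of r p.1)
end

section
/- For all integers d ≥ 2 and n ≥ 2, the product poset (Fin n)^d — d-tuples with entries in {0,1,…,n−1} ordered coordinatewise — has dimension exactly d: it has a realizer of size d but no realizer of size d − 1. -/
/-- The key of a tuple for the `j`-th linear extension: its `j`-th coordinate, followed by
the whole tuple in lexicographic order as a tie-breaker. -/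
def lexKey {d n : ℕ} (j : Fin d) (u : Fin d → Fin n) : Fin n ×ₗ Lex (Fin d → Fin n) :=
  toLex (u j, toLex u)

theorem lexKey_injective {d n : ℕ} (j : Fin d) :
    Function.Injective (lexKey (n := n) j) := by
  intro u v h
  exact toLex.injective (congrArg Prod.snd (toLex.injective h))

theorem lexKey_mono {d n : ℕ} (j : Fin d) {u v : Fin d → Fin n} (h : ∀ i, u i ≤ v i) :
    lexKey j u ≤ lexKey j v :=
  Prod.Lex.toLex_mono (Prod.mk_le_mk.2 ⟨h j, Pi.toLex_monotone h⟩)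

theorem le_of_lexKey_le {d n : ℕ} (j : Fin d) {u v : Fin d → Fin n}
    (h : lexKey j u ≤ lexKey j v) : u j ≤ v j := by
  rcases Prod.Lex.toLex_le_toLex.1 h with h | h
  · exact h.le
  · exact h.1.le

theorem grid_hasDimLE (d n : ℕ) :
    HasDimLE (fun u v : Fin d → Fin n => ∀ i, u i ≤ v i) d := by
  refine ⟨fun j u v => lexKey j u ≤ lexKey j v, fun j => ⟨?_, fun u v h => lexKey_mono j h⟩,
    fun u v => ⟨fun h j => lexKey_mono j h, fun h j => le_of_lexKey_le j (h j)⟩⟩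
  exact
    { refl := fun u => le_refl _
      trans := fun u v w => le_trans
      antisymm := fun u v h h' => lexKey_injective j (le_antisymm h h')
      total := fun u v => le_total _ _ }

theorem grid_le_of_hasDimLE {d n t : ℕ} (hn : 2 ≤ n)
    (h : HasDimLE (fun u v : Fin d → Fin n => ∀ i, u i ≤ v i) t) : d ≤ t := by
  obtain ⟨Ls, hext, hreal⟩ := h
  let z : Fin n := ⟨0, by omega⟩
  let o : Fin n := ⟨1, by omega⟩
  let e : Fin d → Fin d → Fin n := fun i k => if k = i then o else z
  let c : Fin d → Fin d → Fin n := fun i k => if k = i then z else o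
  have hzo : z ≤ o := Nat.zero_le 1
  have hoz : ¬ o ≤ z := Nat.not_succ_le_zero 0
  have hec : ∀ i k, i ≠ k → ∀ l, e i l ≤ c k l := by
    intro i k hik l
    simp only [e, c]
    split_ifs with h1 h2
    · exact absurd (h1.symm.trans h2) hik
    · exact le_rfl
    · exact le_rfl
    · exact hzo
  have hrev : ∀ i, ∃ j, ¬ Ls j (e i) (c i) := by
    intro i
    by_contra! hall
    have := (hreal (e i) (c i)).2 hall i
    simp only [e, c, if_true] at this
    exact hoz this
  choose f hf using hrev
  have hinj : Function.Injective f := by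
    intro i k hfik
    by_contra hik
    obtain ⟨hlin, hle⟩ := hext (f i)
    have hk : Ls (f i) (c k) (e k) :=
      (hlin.total _ _).resolve_right (by rw [hfik]; exact hf k)
    -- `e i ≤ c k ≤ e k ≤ c i` in the common linear extension.
    exact hf i (hlin.trans _ _ _ (hle _ _ (hec i k hik))
      (hlin.trans _ _ _ hk (hle _ _ (hec k i (Ne.symm hik)))))
  simpa using Fintype.card_le_of_injective f hinj

/-- For all `d ≥ 2` and `n ≥ 2`, the product poset `(Fin n)^d`, ordered
coordinatewise, has dimension exactly `d`: it has a realizer of size `d`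
but none of size `d - 1`. -/
theorem grid_dim (d n : ℕ) (hd : 2 ≤ d) (hn : 2 ≤ n) :
    HasDimLE (fun u v : Fin d → Fin n => ∀ i, u i ≤ v i) d ∧
      ¬ HasDimLE (fun u v : Fin d → Fin n => ∀ i, u i ≤ v i) (d - 1) := by
  refine ⟨grid_hasDimLE d n, fun h => ?_⟩
  have := grid_le_of_hasDimLE hn h
  omega
end

section
/- Let P be a finite poset with ground set X, let w ∈ X, and let X', X'' ⊆ X satisfy X' ∪ X'' = X and X' ∩ X'' = {w}. Assume that whenever x ∈ X' \ {w} and y ∈ X'' \ {w} are comparable in P, the comparability passes through w: if x < y in P then x < w and w < y in P, and if y < x in P then y < w and w < x in P. Let M' be a linear extension of the subposet induced on X' of the form A < w < B, and let M'' be a linear extension of the subposet induced on X'' of the form C < w < D. Then the linear order M = [A < C < w < D < B] is a linear extension of P; moreover, the restriction of M to X' is M' and the restriction of M to X'' is M''. -/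
/-- `L` restricted to `S` is a linear order on `S` extending `r` on `S`. -/
def IsLinExtOn {α : Type*} (r : α → α → Prop) (S : Set α) (L : α → α → Prop) : Prop :=
  (∀ x ∈ S, L x x) ∧
  (∀ x ∈ S, ∀ y ∈ S, L x y → L y x → x = y) ∧
  (∀ x ∈ S, ∀ y ∈ S, ∀ z ∈ S, L x y → L y z → L x z) ∧
  (∀ x ∈ S, ∀ y ∈ S, L x y ∨ L y x) ∧
  (∀ x ∈ S, ∀ y ∈ S, r x y → L x y)

open Classical in
/-- The region of `x` in the merged linear order `[A < C < w < D < B]`: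
`0` for `A` (elements of `X' \ {w}` below `w` in `M'`), `1` for `C`
(elements of `X'' \ {w}` below `w` in `M''`), `2` for `w`, `3` for `D`, `4` for `B`. -/
noncomputable def mergeRegion {α : Type*} (X' : Set α) (w : α)
    (M' M'' : α → α → Prop) (x : α) : ℕ :=
  if x = w then 2
  else if x ∈ X' then (if M' x w then 0 else 4)
  else (if M'' x w then 1 else 3)

/-- The merged relation `M = [A < C < w < D < B]` obtained from
`M' = [A < w < B]` on `X'` and `M'' = [C < w < D]` on `X''`. -/
def mergeRel {α : Type*} (X' X'' : Set α) (w : α)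
    (M' M'' : α → α → Prop) (x y : α) : Prop :=
  mergeRegion X' w M' M'' x < mergeRegion X' w M' M'' y ∨
    (mergeRegion X' w M' M'' x = mergeRegion X' w M' M'' y ∧
      (x = y ∨ (x ∈ X' ∧ y ∈ X' ∧ M' x y) ∨ (x ∈ X'' ∧ y ∈ X'' ∧ M'' x y)))

/-- The merged relation restricts to `M'` on `X'`: elements of `X'` in different regions are
separated by `w` in `M'` as well, and ties are broken by `M'` itself. -/
lemma mergeRel_iff_left {α : Type*} {r : α → α → Prop} {w : α} {X' X'' : Set α}
    (hI : X' ∩ X'' = {w}) {M' M'' : α → α → Prop}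
    (hM' : IsLinExtOn r X' M') :
    ∀ x ∈ X', ∀ y ∈ X', (mergeRel X' X'' w M' M'' x y ↔ M' x y) := by
  have hw : ∀ z, (z ∈ X' ∧ z ∈ X'') ↔ z = w := fun z => by
    simpa using Set.ext_iff.mp hI z
  obtain ⟨h1, h2, h3, h4, -⟩ := hM'
  intro x hx y hy
  have hwX := ((hw w).2 rfl).1
  have := h1 x hx
  have := h2 x hx w hwX
  have := h2 y hy w hwX
  have := h3 x hx w hwX y hy
  have := h3 x hx y hy w hwX
  have := h3 w hwX x hx y hy
  have := h4 x hx w hwX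
  have := h4 y hy w hwX
  have := h4 x hx y hy
  have := h2 x hx y hy
  have := hw x
  have := hw y
  unfold mergeRel mergeRegion
  grind

/-- The merged relation restricts to `M''` on `X''`, for the same reason as on `X'`. -/
lemma mergeRel_iff_right {α : Type*} {r : α → α → Prop} {w : α} {X' X'' : Set α}
    (hI : X' ∩ X'' = {w}) {M' M'' : α → α → Prop}
    (hM'' : IsLinExtOn r X'' M'') :
    ∀ x ∈ X'', ∀ y ∈ X'', (mergeRel X' X'' w M' M'' x y ↔ M'' x y) := by
  have hw : ∀ z, (z ∈ X' ∧ z ∈ X'') ↔ z = w := fun z => by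
    simpa using Set.ext_iff.mp hI z
  obtain ⟨h1, h2, h3, h4, -⟩ := hM''
  intro x hx y hy
  have hwX := ((hw w).2 rfl).2
  have := h1 x hx
  have := h2 x hx w hwX
  have := h2 y hy w hwX
  have := h3 x hx w hwX y hy
  have := h3 x hx y hy w hwX
  have := h3 w hwX x hx y hy
  have := h4 x hx w hwX
  have := h4 y hy w hwX
  have := h4 x hx y hy
  have := h2 x hx y hy
  have := hw x
  have := hw y
  unfold mergeRel mergeRegion
  grind

/-- Two elements of the same region lie on a common side. The extra clauses of the second
alternative make the side consistent when three elements share a region. -/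
lemma common_side_of_mergeRegion_eq {α : Type*} {w : α} {X' X'' : Set α}
    (hU : X' ∪ X'' = Set.univ) (hI : X' ∩ X'' = {w}) {M' M'' : α → α → Prop} {x y : α}
    (h : mergeRegion X' w M' M'' x = mergeRegion X' w M' M'' y) :
    (x ∈ X' ∧ y ∈ X') ∨ (x ∈ X'' ∧ y ∈ X'' ∧ (x ∈ X' → x = w) ∧ (y ∈ X' → y = w)) := by
  have hw : ∀ z, (z ∈ X' ∧ z ∈ X'') ↔ z = w := fun z => by
    simpa using Set.ext_iff.mp hI z
  have hu : ∀ z, z ∈ X' ∨ z ∈ X'' := fun z => by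
    simpa using Set.ext_iff.mp hU z
  have := hw x
  have := hw y
  have := hw w
  have := hu x
  have := hu y
  unfold mergeRegion at h
  grind

lemma mergeRegion_le_of_mergeRel {α : Type*} {w : α} {X' X'' : Set α} {M' M'' : α → α → Prop}
    {x y : α} (h : mergeRel X' X'' w M' M'' x y) :
    mergeRegion X' w M' M'' x ≤ mergeRegion X' w M' M'' y := by
  rcases h with h | h
  · exact h.le
  · exact h.1.le

/-- The merge rule: if `X' ∪ X'' = X`, `X' ∩ X'' = {w}`, every comparability
between `X' \ {w}` and `X'' \ {w}` passes through `w`, and `M' = [A < w < B]`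
and `M'' = [C < w < D]` are linear extensions of the subposets induced on `X'`
and `X''`, then `M = [A < C < w < D < B]` is a linear extension of `P` whose
restriction to `X'` is `M'` and whose restriction to `X''` is `M''`. -/
theorem merge_rule {α : Type*} [Fintype α]
    (r : α → α → Prop) (hr : IsPartialOrder α r) (w : α) (X' X'' : Set α)
    (hU : X' ∪ X'' = Set.univ) (hI : X' ∩ X'' = {w})
    (hpass : ∀ x ∈ X' \ {w}, ∀ y ∈ X'' \ {w},
      (r x y → r x w ∧ r w y) ∧ (r y x → r y w ∧ r w x))
    (M' M'' : α → α → Prop)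
    (hM' : IsLinExtOn r X' M') (hM'' : IsLinExtOn r X'' M'') :
    IsLinExt r (mergeRel X' X'' w M' M'') ∧
      (∀ x ∈ X', ∀ y ∈ X', (mergeRel X' X'' w M' M'' x y ↔ M' x y)) ∧
      (∀ x ∈ X'', ∀ y ∈ X'', (mergeRel X' X'' w M' M'' x y ↔ M'' x y)) := by
  have hL := mergeRel_iff_left (M'' := M'') hI hM'
  have hR := mergeRel_iff_right (M' := M') hI hM''
  have hside := fun x y => common_side_of_mergeRegion_eq (M' := M') (M'' := M'') (x := x) (y := y)
    hU hI
  have hle := fun x y => mergeRegion_le_of_mergeRel (X' := X') (X'' := X'') (w := w) (M' := M')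
    (M'' := M'') (x := x) (y := y)
  have hlt : ∀ x y, mergeRegion X' w M' M'' x < mergeRegion X' w M' M'' y →
      mergeRel X' X'' w M' M'' x y := fun x y h => Or.inl h
  have hw : ∀ z, (z ∈ X' ∧ z ∈ X'') ↔ z = w := fun z => by
    simpa using Set.ext_iff.mp hI z
  have hu : ∀ z, z ∈ X' ∨ z ∈ X'' := fun z => by
    simpa using Set.ext_iff.mp hU z
  obtain ⟨-, h2, h3, h4, h5⟩ := hM'
  obtain ⟨-, k2, k3, k4, k5⟩ := hM''
  have hrefl : ∀ x, mergeRel X' X'' w M' M'' x x := fun x => Or.inr ⟨rfl, Or.inl rfl⟩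
  have htrans : ∀ x y z, mergeRel X' X'' w M' M'' x y → mergeRel X' X'' w M' M'' y z →
      mergeRel X' X'' w M' M'' x z := by
    intro x y z hxy hyz
    rcases (hle x y hxy).lt_or_eq with h | h
    · exact hlt _ _ (h.trans_le (hle y z hyz))
    rcases (hle y z hyz).lt_or_eq with h' | h'
    · exact hlt _ _ (h.trans_lt h')
    -- All three lie in one region, hence on one side, where the side's order is transitive.
    have a := hside x y h
    have b := hside y z h'
    have c := hside x z (h.trans h')
    have hww := (hw w).2 rfl
    by_cases hX : x ∈ X' ∧ y ∈ X' ∧ z ∈ X'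
    · obtain ⟨hx, hy, hz⟩ := hX
      exact (hL x hx z hz).2 (h3 x hx y hy z hz ((hL x hx y hy).1 hxy) ((hL y hy z hz).1 hyz))
    · have hX2 : x ∈ X'' ∧ y ∈ X'' ∧ z ∈ X'' := by grind
      obtain ⟨hx, hy, hz⟩ := hX2
      exact (hR x hx z hz).2 (k3 x hx y hy z hz ((hR x hx y hy).1 hxy) ((hR y hy z hz).1 hyz))
  have hanti : ∀ x y, mergeRel X' X'' w M' M'' x y → mergeRel X' X'' w M' M'' y x → x = y := by
    intro x y hxy hyx
    rcases hside x y (le_antisymm (hle x y hxy) (hle y x hyx)) with ⟨hx, hy⟩ | ⟨hx, hy, -⟩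
    · exact h2 x hx y hy ((hL x hx y hy).1 hxy) ((hL y hy x hx).1 hyx)
    · exact k2 x hx y hy ((hR x hx y hy).1 hxy) ((hR y hy x hx).1 hyx)
  have htot : ∀ x y, mergeRel X' X'' w M' M'' x y ∨ mergeRel X' X'' w M' M'' y x := by
    intro x y
    rcases lt_trichotomy (mergeRegion X' w M' M'' x) (mergeRegion X' w M' M'' y) with h | h | h
    · exact Or.inl (hlt _ _ h)
    · rcases hside x y h with ⟨hx, hy⟩ | ⟨hx, hy, -⟩
      · rw [hL x hx y hy, hL y hy x hx]
        exact h4 x hx y hy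
      · rw [hR x hx y hy, hR y hy x hx]
        exact k4 x hx y hy
    · exact Or.inr (hlt _ _ h)
  have hextL : ∀ x ∈ X', ∀ y ∈ X', r x y → mergeRel X' X'' w M' M'' x y :=
    fun x hx y hy h => (hL x hx y hy).2 (h5 x hx y hy h)
  have hextR : ∀ x ∈ X'', ∀ y ∈ X'', r x y → mergeRel X' X'' w M' M'' x y :=
    fun x hx y hy h => (hR x hx y hy).2 (k5 x hx y hy h)
  have hww := (hw w).2 rfl
  refine ⟨⟨?_, ?_⟩, hL, hR⟩
  · exact { refl := hrefl, trans := htrans, antisymm := hanti, total := htot }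
  · intro x y hxy
    by_cases hx : x = w
    · subst hx
      rcases hu y with hy | hy
      · exact hextL _ hww.1 _ hy hxy
      · exact hextR _ hww.2 _ hy hxy
    by_cases hy : y = w
    · subst hy
      rcases hu x with hx | hx
      · exact hextL _ hx _ hww.1 hxy
      · exact hextR _ hx _ hww.2 hxy
    rcases hu x with hx' | hx' <;> rcases hu y with hy' | hy'
    · exact hextL _ hx' _ hy' hxy
    · obtain ⟨p, q⟩ := (hpass x ⟨hx', hx⟩ y ⟨hy', hy⟩).1 hxy
      exact htrans x w y (hextL _ hx' _ hww.1 p) (hextR _ hww.2 _ hy' q)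
    · obtain ⟨p, q⟩ := (hpass y ⟨hy', hy⟩ x ⟨hx', hx⟩).2 hxy
      exact htrans x w y (hextR _ hx' _ hww.2 p) (hextL _ hww.1 _ hy' q)
    · exact hextR _ hx' _ hy' hxy
end

section
/- (Product Ramsey Theorem.) For every 4-tuple (r, d, k, m) of positive integers with m ≥ k, there exists an integer n_0 ≥ k with the following property: if X_1,…,X_d are finite sets with |X_i| ≥ n_0 for every i = 1,…,d, and φ assigns to each grid g = T_1 × T_2 × ⋯ × T_d (where each T_j is a k-element subset of X_j) a color φ(g) from a set R of r colors, then there exist a color α ∈ R and m-element subsets H_j ⊆ X_j for each j = 1,…,d such that φ(g) = α for every grid g = T_1 × ⋯ × T_d with T_j a k-element subset of H_j for each j. -/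
/-!
The proof rests on the finite hypergraph Ramsey theorem `ramsey_sets`, proved by induction on the
size `k` of the colored sets. Its induction step is `ramsey_offDiagonal`, the off-diagonal form in
which each color `i` has its own target size `a i`: fix a vertex `x`, use the theorem for `k`-sets
on the link coloring `T ↦ φ (insert x T)` to get a large set whose link color is constantly `i`,
and inside it use the off-diagonal statement with `a i` lowered by one.

The product theorem `product_ramsey_aux` follows by induction on the number `d` of factors. Shrink
the first factor to a set `Y` whose size is the Ramsey number, and color a grid of the remaining
factors by the whole function `S ↦ φ (S, T')` on subsets of `Y`, which takes one of `r ^ 2 ^ |Y|`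
values. On a homogeneous family of the remaining factors this function is fixed, so it is a
coloring of the `k`-subsets of `Y` alone, to which the hypergraph Ramsey theorem applies.
-/

/-- The finite Ramsey theorem for `k`-element sets, `r` colors and homogeneous sets of size `m`. -/
def RamseySets (k r m : ℕ) : Prop :=
  ∃ n : ℕ, ∀ (β : Type) (X : Finset β), n ≤ X.card → ∀ φ : Finset β → Fin r,
    ∃ (α : Fin r) (H : Finset β), H ⊆ X ∧ H.card = m ∧ ∀ T ⊆ H, T.card = k → φ T = α

/-- Off-diagonal Ramsey for `(k+1)`-sets, deduced from Ramsey for `k`-sets by induction on the sum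
of the target sizes. -/
lemma ramsey_offDiagonal (k r : ℕ) (hk : ∀ m, RamseySets k r m) (s : ℕ) :
    ∀ a : Fin r → ℕ, ∑ i, a i = s →
      ∃ n : ℕ, ∀ (β : Type) (X : Finset β), n ≤ X.card → ∀ φ : Finset β → Fin r,
        ∃ (α : Fin r) (H : Finset β), H ⊆ X ∧ H.card = a α ∧
          ∀ T ⊆ H, T.card = k + 1 → φ T = α := by
  classical
  induction s with
  | zero =>
    intro a ha
    refine ⟨0, fun β X _ φ => ⟨φ ∅, ∅, by simp, ?_, ?_⟩⟩
    · simp only [Finset.sum_eq_zero_iff] at ha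
      simp [ha]
    · intro T hT hc
      simp [Finset.subset_empty.1 hT] at hc
  | succ s ih =>
    intro a ha
    by_cases h0 : ∃ i, a i = 0
    · obtain ⟨i, hi⟩ := h0
      refine ⟨0, fun β X _ φ => ⟨i, ∅, by simp, by simp [hi], ?_⟩⟩
      intro T hT hc
      simp [Finset.subset_empty.1 hT] at hc
    · push Not at h0
      have hstep : ∀ i, ∑ j, Function.update a i (a i - 1) j = s := by
        intro i
        have h1 := Finset.sum_update_of_mem (Finset.mem_univ i) a (a i - 1)
        have h2 := Finset.add_sum_erase Finset.univ a (Finset.mem_univ i)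
        rw [← Finset.erase_eq] at h1
        have := h0 i
        omega
      choose N hN using fun i => ih _ (hstep i)
      obtain ⟨n, hn⟩ := hk (Finset.univ.sup N)
      refine ⟨n + 1, fun β X hX φ => ?_⟩
      obtain ⟨x, hx⟩ : X.Nonempty := Finset.card_pos.1 (by omega)
      obtain ⟨i, Y, hYX, hYc, hY⟩ := hn β (X.erase x)
        (by rw [Finset.card_erase_of_mem hx]; omega) (fun T => φ (insert x T))
      have hxY : x ∉ Y := fun h => by simpa using hYX h
      have hYX' : Y ⊆ X := hYX.trans (Finset.erase_subset _ _)
      obtain ⟨j, H, hHY, hHc, hH⟩ := hN i β Y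
        (by rw [hYc]; exact Finset.le_sup (Finset.mem_univ i)) φ
      by_cases hji : j = i
      · subst hji
        have hxH : x ∉ H := fun h => hxY (hHY h)
        refine ⟨j, insert x H, Finset.insert_subset hx (hHY.trans hYX'), ?_, ?_⟩
        · rw [Finset.card_insert_of_notMem hxH, hHc]
          have := h0 j
          simp only [Function.update_self]
          omega
        · intro T hT hc
          by_cases hxT : x ∈ T
          · have h := hY (T.erase x) ((Finset.subset_insert_iff.1 hT).trans hHY)
              (by rw [Finset.card_erase_of_mem hxT]; omega)
            simpa [Finset.insert_erase hxT] using h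
          · exact hH T ((Finset.subset_insert_iff_of_notMem hxT).1 hT) hc
      · refine ⟨j, H, hHY.trans hYX', ?_, hH⟩
        rw [hHc, Function.update_of_ne hji]

lemma ramsey_sets (k r : ℕ) : ∀ m, RamseySets k r m := by
  induction k with
  | zero =>
    intro m
    refine ⟨m, fun β X hX φ => ?_⟩
    obtain ⟨H, hH, hc⟩ := Finset.exists_subset_card_eq hX
    exact ⟨φ ∅, H, hH, hc, fun T _ hT => by rw [Finset.card_eq_zero.1 hT]⟩
  | succ k ih =>
    intro m
    exact ramsey_offDiagonal k r ih _ (fun _ => m) rfl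

/-- The product theorem by induction on the number `d` of factors. The number of colors is quantified
inside, since the step from `d` to `d + 1` uses the case `d` with far more colors. -/
lemma product_ramsey_aux (k m d : ℕ) : ∀ r : ℕ,
    ∃ n₀ : ℕ, ∀ (β : Fin d → Type) (X : ∀ i, Finset (β i)), (∀ i, n₀ ≤ (X i).card) →
      ∀ φ : (∀ i, Finset (β i)) → Fin r,
        ∃ (α : Fin r) (H : ∀ i, Finset (β i)),
          (∀ i, H i ⊆ X i) ∧ (∀ i, (H i).card = m) ∧
          ∀ T : ∀ i, Finset (β i),
            (∀ i, T i ⊆ H i) → (∀ i, (T i).card = k) → φ T = α := by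
  classical
  induction d with
  | zero =>
    intro r
    exact ⟨0, fun β X _ φ => ⟨φ X, X, fun i => i.elim0, fun i => i.elim0,
      fun T _ _ => congrArg φ (funext fun i => i.elim0)⟩⟩
  | succ d ih =>
    intro r
    obtain ⟨n, hn⟩ := ramsey_sets k r m
    obtain ⟨N, hN⟩ := ih (r ^ 2 ^ n)
    refine ⟨max n N, fun β X hX φ => ?_⟩
    obtain ⟨Y, hYX, hYc⟩ := Finset.exists_subset_card_eq ((le_max_left n N).trans (hX 0))
    have hcard : Fintype.card (Y.powerset → Fin r) = r ^ 2 ^ n := by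
      simp [Finset.card_powerset, hYc]
    let e : (Y.powerset → Fin r) ≃ Fin (r ^ 2 ^ n) := Fintype.equivFinOfCardEq hcard
    obtain ⟨f, H, hHX, hHc, hH⟩ := hN (fun i => β i.succ) (fun i => X i.succ)
      (fun i => (le_max_right n N).trans (hX i.succ))
      (fun T' => e fun S => φ (Fin.cons S.1 T'))
    -- Outside the subsets of `Y` the value of this coloring is irrelevant.
    obtain ⟨α, H₀, hH₀Y, hH₀c, hH₀⟩ := hn (β 0) Y hYc.ge
      (fun S => if h : S ∈ Y.powerset then e.symm f ⟨S, h⟩ else φ X)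
    refine ⟨α, Fin.cons H₀ H, ?_, ?_, ?_⟩
    · exact Fin.cases (hH₀Y.trans hYX) hHX
    · exact Fin.cases hH₀c hHc
    · intro T hT hTc
      have hT0 : T 0 ⊆ H₀ := hT 0
      have hmem : T 0 ∈ Y.powerset := Finset.mem_powerset.2 (hT0.trans hH₀Y)
      have h1 := hH₀ (T 0) hT0 (hTc 0)
      have h2 := hH (fun i => T i.succ) (fun i => hT i.succ) (fun i => hTc i.succ)
      rw [dif_pos hmem, ← h2, Equiv.symm_apply_apply] at h1
      rw [← h1]
      exact congrArg φ (Fin.cons_self_tail T).symm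

/-- The Product Ramsey Theorem: for every `(r, d, k, m)` with `m ≥ k` there is
`n₀ ≥ k` such that whenever `X₁, …, X_d` are finite sets of size at least `n₀`
and `φ` colors every `k^d`-grid `T₁ × ⋯ × T_d` (each `T_j` a `k`-element subset
of `X_j`) with one of `r` colors, there are a color `α` and `m`-element subsets
`H_j ⊆ X_j` such that every grid contained in `H₁ × ⋯ × H_d` gets color `α`. -/
theorem product_ramsey (r d k m : ℕ) (hr : 1 ≤ r) (hd : 1 ≤ d) (hk : 1 ≤ k)
    (hm : k ≤ m) :
    ∃ n₀ : ℕ, k ≤ n₀ ∧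
      ∀ (β : Fin d → Type) (X : ∀ i, Finset (β i)),
        (∀ i, n₀ ≤ (X i).card) →
        ∀ φ : (∀ i, Finset (β i)) → Fin r,
          ∃ (α : Fin r) (H : ∀ i, Finset (β i)),
            (∀ i, H i ⊆ X i) ∧ (∀ i, (H i).card = m) ∧
            ∀ T : ∀ i, Finset (β i),
              (∀ i, T i ⊆ H i) → (∀ i, (T i).card = k) → φ T = α := by
  obtain ⟨n, hn⟩ := product_ramsey_aux k m d r
  exact ⟨max k n, le_max_left _ _, fun β X hX φ =>
    hn β X (fun i => (le_max_right k n).trans (hX i)) φ⟩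
end

section
/- Let P be a finite poset which is not an antichain, and let w be the width of the subposet of P induced on the set of non-maximal elements P − Max(P). Then the dimension of P is at most w + 1. -/
/-- `A` is an antichain of the order `r` inside the set `S`. -/
def IsAntichainIn {α : Type*} (r : α → α → Prop) (S : Set α) (A : Finset α) : Prop :=
  ↑A ⊆ S ∧ ∀ x ∈ A, ∀ y ∈ A, x ≠ y → ¬ r x y ∧ ¬ r y x

/-- `w` is the width of the subposet of `r` induced on `S`: the maximum size
of an antichain contained in `S`. -/
def IsWidthOn {α : Type*} (r : α → α → Prop) (S : Set α) (w : ℕ) : Prop :=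
  IsGreatest {k | ∃ A : Finset α, IsAntichainIn r S A ∧ A.card = k} w

/-! ### Dilworth's theorem -/

/-- The colours of a chain cover are injective on antichains. -/
lemma color_injOn {α : Type*} [PartialOrder α] {S A : Finset α} {c : α → ℕ}
    (hc : ∀ x ∈ S, ∀ y ∈ S, c x = c y → x ≤ y ∨ y ≤ x)
    (hAS : A ⊆ S) (hA : IsAntichain (· ≤ ·) (A : Set α)) : Set.InjOn c A := by
  intro x hx y hy hxy
  rcases hc x (hAS hx) y (hAS hy) hxy with h | h
  · exact hA.eq hx hy h
  · exact (hA.eq hy hx h).symm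

/-- An antichain with as many elements as there are colours meets every colour class. -/
lemma exists_mem_color {α : Type*} [PartialOrder α] {S A : Finset α} {c : α → ℕ} {k : ℕ}
    (hck : ∀ x ∈ S, c x < k)
    (hc : ∀ x ∈ S, ∀ y ∈ S, c x = c y → x ≤ y ∨ y ≤ x)
    (hAS : A ⊆ S) (hA : IsAntichain (· ≤ ·) (A : Set α)) (hAk : A.card = k)
    {i : ℕ} (hi : i < k) : ∃ x ∈ A, c x = i := by
  classical
  have himg : A.image c = Finset.range k := by
    apply Finset.eq_of_subset_of_card_le
    · intro j hj
      obtain ⟨x, hx, rfl⟩ := Finset.mem_image.1 hj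
      exact Finset.mem_range.2 (hck x (hAS hx))
    · rw [Finset.card_image_of_injOn (color_injOn hc hAS hA), Finset.card_range, hAk]
  have : i ∈ A.image c := by rw [himg]; exact Finset.mem_range.2 hi
  simpa using this

/-- Dilworth's theorem in min-max form: for some `k`, the finite set `S` contains an antichain of
size `k` and is covered by `k` chains. The chains are the fibres of `c` on `S`. -/
theorem exists_antichain_chain_cover {α : Type*} [PartialOrder α] (S : Finset α) :
    ∃ k : ℕ, (∃ A ⊆ S, IsAntichain (· ≤ ·) (A : Set α) ∧ A.card = k) ∧
      ∃ c : α → ℕ, (∀ x ∈ S, c x < k) ∧ ∀ x ∈ S, ∀ y ∈ S, c x = c y → x ≤ y ∨ y ≤ x := by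
  classical
  induction S using Finset.strongInduction with
  | H S ih =>
  rcases S.eq_empty_or_nonempty with rfl | hne
  · exact ⟨0, ⟨∅, by simp, by simp, rfl⟩, fun _ => 0, by simp, by simp⟩
  obtain ⟨a, haS, hamax⟩ := S.exists_maximal hne
  obtain ⟨k, ⟨A, hAS, hA, hAk⟩, c, hck, hc⟩ := ih (S.erase a) (Finset.erase_ssubset haS)
  -- `x i` is the largest element of colour `i` lying in an antichain of size `k`
  have hx : ∀ i : Fin k, ∃ x ∈ S.erase a, c x = i ∧
      (∃ B ⊆ S.erase a, IsAntichain (· ≤ ·) (B : Set α) ∧ B.card = k ∧ x ∈ B) ∧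
      ∀ B ⊆ S.erase a, IsAntichain (· ≤ ·) (B : Set α) → B.card = k → ∀ y ∈ B, c y = i → y ≤ x := by
    intro i
    obtain ⟨z, hzA, hzi⟩ := exists_mem_color hck hc hAS hA hAk i.2
    obtain ⟨x, hxT, hxmax⟩ := ((S.erase a).filter (fun x => c x = i ∧
      ∃ B ⊆ S.erase a, IsAntichain (· ≤ ·) (B : Set α) ∧ B.card = k ∧ x ∈ B)).exists_maximal
      ⟨z, Finset.mem_filter.2 ⟨hAS hzA, hzi, A, hAS, hA, hAk, hzA⟩⟩
    obtain ⟨hxS, hxi, hxB⟩ := Finset.mem_filter.1 hxT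
    refine ⟨x, hxS, hxi, hxB, fun B hBS hB hBk y hy hyi => ?_⟩
    rcases hc y (hBS hy) x hxS (hyi.trans hxi.symm) with h | h
    · exact h
    · exact hxmax (Finset.mem_filter.2 ⟨hBS hy, hyi, B, hBS, hB, hBk, hy⟩) h
  choose x hxS hxc hxB hxtop using hx
  have hanti : ∀ i j, x i ≤ x j → i = j := by
    intro i j hij
    obtain ⟨B, hBS, hB, hBk, hxjB⟩ := hxB j
    obtain ⟨y, hyB, hyi⟩ := exists_mem_color hck hc hBS hB hBk i.2
    have hyx : y = x j := hB.eq hyB hxjB ((hxtop i B hBS hB hBk y hyB hyi).trans hij)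
    exact Fin.ext (by rw [← hyi, hyx, hxc])
  by_cases hai : ∃ i, x i ≤ a
  · obtain ⟨i, hia⟩ := hai
    -- removing the chain `K` below destroys every antichain of size `k`
    set K := insert a ((S.erase a).filter (fun z => c z = i ∧ z ≤ x i)) with hK
    have haK : a ∈ K := Finset.mem_insert_self _ _
    have hsub : S \ K ⊆ S.erase a := by
      intro z hz
      rw [Finset.mem_sdiff] at hz
      exact Finset.mem_erase.2 ⟨fun h => hz.2 (h ▸ haK), hz.1⟩
    obtain ⟨k', ⟨A', hAS', hA', hAk'⟩, c', hck', hc'⟩ := ih (S \ K)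
      (Finset.ssubset_of_subset_of_ssubset hsub (Finset.erase_ssubset haS))
    have hle : k' ≤ k := by
      rw [← hAk', ← Finset.card_image_of_injOn (color_injOn hc (hAS'.trans hsub) hA'),
        ← Finset.card_range k]
      apply Finset.card_le_card
      intro j hj
      obtain ⟨z, hz, rfl⟩ := Finset.mem_image.1 hj
      exact Finset.mem_range.2 (hck z (hsub (hAS' hz)))
    have hne : k' ≠ k := by
      rintro rfl
      obtain ⟨y, hyA, hyi⟩ := exists_mem_color hck hc (hAS'.trans hsub) hA' hAk' i.2
      have hyx := hxtop i A' (hAS'.trans hsub) hA' hAk' y hyA hyi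
      exact (Finset.mem_sdiff.1 (hAS' hyA)).2 (Finset.mem_insert_of_mem
        (Finset.mem_filter.2 ⟨hsub (hAS' hyA), hyi, hyx⟩))
    have hKchain : ∀ u ∈ K, ∀ v ∈ K, u ≤ v ∨ v ≤ u := by
      intro u hu v hv
      rcases Finset.mem_insert.1 hu with rfl | hu
      · rcases Finset.mem_insert.1 hv with rfl | hv
        · exact Or.inl le_rfl
        · exact Or.inr ((Finset.mem_filter.1 hv).2.2.trans hia)
      · have hu := Finset.mem_filter.1 hu
        rcases Finset.mem_insert.1 hv with rfl | hv
        · exact Or.inl (hu.2.2.trans hia)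
        · have hv := Finset.mem_filter.1 hv
          exact hc u hu.1 v hv.1 (hu.2.1.trans hv.2.1.symm)
    refine ⟨k, ⟨A, hAS.trans (Finset.erase_subset _ _), hA, hAk⟩,
      fun z => if z ∈ K then k' else c' z, ?_, ?_⟩
    · intro z hz
      by_cases hzK : z ∈ K
      · simp only [hzK, if_true]; omega
      · simp only [hzK, if_false]
        have := hck' z (Finset.mem_sdiff.2 ⟨hz, hzK⟩)
        omega
    · intro u hu v hv huv
      by_cases huK : u ∈ K <;> by_cases hvK : v ∈ K <;>
        simp only [huK, hvK, if_true, if_false] at huv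
      · exact hKchain u huK v hvK
      · have := hck' v (Finset.mem_sdiff.2 ⟨hv, hvK⟩); omega
      · have := hck' u (Finset.mem_sdiff.2 ⟨hu, huK⟩); omega
      · exact hc' u (Finset.mem_sdiff.2 ⟨hu, huK⟩) v (Finset.mem_sdiff.2 ⟨hv, hvK⟩) huv
  · push Not at hai
    have hxinj : Function.Injective x := fun i j h => hanti i j h.le
    have hane : ∀ i, x i ≠ a := fun i => Finset.ne_of_mem_erase (hxS i)
    have hax : ∀ i, ¬ a ≤ x i := fun i h =>
      hai i (hamax (Finset.mem_of_mem_erase (hxS i)) h)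
    refine ⟨k + 1, ⟨insert a (Finset.univ.image x), ?_, ?_, ?_⟩,
      fun z => if z = a then k else c z, ?_, ?_⟩
    · intro z hz
      rcases Finset.mem_insert.1 hz with rfl | hz
      · exact haS
      · obtain ⟨i, -, rfl⟩ := Finset.mem_image.1 hz
        exact Finset.mem_of_mem_erase (hxS i)
    · intro u hu v hv huv hle
      simp only [Finset.coe_insert, Finset.coe_image, Finset.coe_univ, Set.image_univ,
        Set.mem_insert_iff, Set.mem_range] at hu hv
      rcases hu with rfl | ⟨i, rfl⟩ <;> rcases hv with rfl | ⟨j, rfl⟩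
      · exact huv rfl
      · exact hax j hle
      · exact hai i hle
      · exact huv (congrArg x (hanti i j hle))
    · rw [Finset.card_insert_of_notMem, Finset.card_image_of_injective _ hxinj, Finset.card_univ,
        Fintype.card_fin]
      simpa using hane
    · intro z hz
      by_cases hza : z = a
      · simp [hza]
      · simp only [hza, if_false]
        exact (hck z (Finset.mem_erase.2 ⟨hza, hz⟩)).trans (Nat.lt_succ_self k)
    · intro u hu v hv huv
      by_cases hua : u = a <;> by_cases hva : v = a <;>
        simp only [hua, hva, if_true, if_false] at huv
      · exact Or.inl (hua.trans hva.symm).le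
      · have := hck v (Finset.mem_erase.2 ⟨hva, hv⟩); omega
      · have := hck u (Finset.mem_erase.2 ⟨hua, hu⟩); omega
      · exact hc u (Finset.mem_erase.2 ⟨hua, hu⟩) v (Finset.mem_erase.2 ⟨hva, hv⟩) huv

/-! ### Linear extensions from rank functions -/

/-- The relation comparing elements by the rank `f` first and breaking ties by `M`. -/
def lexRel {α : Type*} (f : α → ℕ) (M : α → α → Prop) (x y : α) : Prop :=
  f x < f y ∨ (f x = f y ∧ M x y)

lemma lexRel_isLinExt {α : Type*} {r M : α → α → Prop} {f : α → ℕ} (hM : IsLinExt r M)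
    (hf : ∀ x y, r x y → f x ≤ f y) : IsLinExt r (lexRel f M) := by
  obtain ⟨hlin, hext⟩ := hM
  refine ⟨{ refl := ?_, trans := ?_, antisymm := ?_, total := ?_ }, ?_⟩
  · exact fun x => Or.inr ⟨rfl, hlin.refl x⟩
  · rintro x y z (h | ⟨h, h'⟩) (g | ⟨g, g'⟩)
    · exact Or.inl (h.trans g)
    · exact Or.inl (g ▸ h)
    · exact Or.inl (h ▸ g)
    · exact Or.inr ⟨h.trans g, hlin.trans _ _ _ h' g'⟩
  · rintro x y (h | ⟨h, h'⟩) (g | ⟨g, g'⟩)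
    · omega
    · omega
    · omega
    · exact hlin.antisymm _ _ h' g'
  · intro x y
    rcases lt_trichotomy (f x) (f y) with h | h | h
    · exact Or.inl (Or.inl h)
    · rcases hlin.total x y with g | g
      · exact Or.inl (Or.inr ⟨h, g⟩)
      · exact Or.inr (Or.inr ⟨h.symm, g⟩)
    · exact Or.inr (Or.inl h)
  · intro x y h
    rcases (hf x y h).lt_or_eq with g | g
    · exact Or.inl g
    · exact Or.inr ⟨g, hext x y h⟩

lemma not_lexRel_of_lt {α : Type*} {f : α → ℕ} {M : α → α → Prop} {x y : α} (h : f y < f x) :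
    ¬ lexRel f M x y := by
  rintro (g | ⟨g, -⟩) <;> omega

open Classical in
/-- The number of elements of `C` that are `r`-below `x`. -/
noncomputable def rho {α : Type*} (r : α → α → Prop) (C : Finset α) (x : α) : ℕ :=
  (C.filter (fun c => r c x)).card

lemma rho_mono {α : Type*} {r : α → α → Prop} (hr : IsPartialOrder α r) (C : Finset α)
    (x y : α) (h : r x y) : rho r C x ≤ rho r C y := by
  classical
  apply Finset.card_le_card
  intro c hc
  have hc := Finset.mem_filter.1 hc
  exact Finset.mem_filter.2 ⟨hc.1, hr.trans _ _ _ hc.2 h⟩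

/-- A member `x` of a chain `C` has larger rank than every `y` with `x ≰ y`: all members of `C`
below `y` are below `x`, and `x` itself is not among them. -/
lemma rho_lt {α : Type*} {r : α → α → Prop} (hr : IsPartialOrder α r) {C : Finset α}
    (hC : ∀ u ∈ C, ∀ v ∈ C, r u v ∨ r v u) {x y : α} (hx : x ∈ C) (hxy : ¬ r x y) :
    rho r C y < rho r C x := by
  classical
  apply Finset.card_lt_card
  rw [Finset.ssubset_iff_of_subset]
  · exact ⟨x, Finset.mem_filter.2 ⟨hx, hr.refl x⟩, fun h => hxy (Finset.mem_filter.1 h).2⟩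
  · intro c hc
    have hc := Finset.mem_filter.1 hc
    refine Finset.mem_filter.2 ⟨hc.1, ?_⟩
    rcases hC c hc.1 x hx with h | h
    · exact h
    · exact absurd (hr.trans _ _ _ h hc.2) hxy

/-! ### The dimension bound -/

/-- If a finite poset `P` is not an antichain and `w` is the width of the
subposet induced on the set of non-maximal elements `P - Max(P)`, then the
dimension of `P` is at most `w + 1`. -/
theorem dim_le_width_nonmax_add_one {α : Type*} [Fintype α]
    (r : α → α → Prop) (hr : IsPartialOrder α r)
    (hna : ∃ x y : α, x ≠ y ∧ r x y)
    (w : ℕ) (hw : IsWidthOn r {x : α | ∃ y : α, r x y ∧ y ≠ x} w) :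
    HasDimLE r (w + 1) := by
  classical
  let _ : PartialOrder α :=
    { le := r
      le_refl := hr.refl
      le_trans := fun x y z h g => hr.trans x y z h g
      le_antisymm := fun x y h g => hr.antisymm x y h g }
  set Q : Finset α := Finset.univ.filter (fun x => ∃ y, r x y ∧ y ≠ x) with hQ
  have hmemQ : ∀ x, x ∈ Q ↔ ∃ y, r x y ∧ y ≠ x := by simp [hQ]
  obtain ⟨k, ⟨A, hAQ, hA, hAk⟩, c, hck, hc⟩ := exists_antichain_chain_cover Q
  have hkw : k ≤ w := by
    refine hw.2 ⟨A, ⟨fun x hx => (hmemQ x).1 (hAQ hx), fun x hx y hy hxy => ⟨?_, ?_⟩⟩, hAk⟩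
    · exact hA hx hy hxy
    · exact hA hy hx hxy.symm
  have hcw : ∀ x ∈ Q, c x < w := fun x hx => (hck x hx).trans_le hkw
  have hw0 : 0 < w := by
    obtain ⟨x, y, hxy, h⟩ := hna
    exact (Nat.zero_le _).trans_lt (hcw x ((hmemQ x).2 ⟨y, h, hxy.symm⟩))
  obtain ⟨M, hMlin, hMext⟩ := extend_partialOrder r
  have hM : IsLinExt r M := ⟨hMlin, hMext⟩
  let C : ℕ → Finset α := fun i => Q.filter (fun x => c x = i)
  have hC : ∀ i, ∀ u ∈ C i, ∀ v ∈ C i, r u v ∨ r v u := by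
    intro i u hu v hv
    have hu := Finset.mem_filter.1 hu
    have hv := Finset.mem_filter.1 hv
    exact hc u hu.1 v hv.1 (hu.2.trans hv.2.symm)
  let L : ℕ → α → α → Prop := fun i => lexRel (rho r (C i)) M
  have hL : ∀ i, IsLinExt r (L i) := fun i => lexRel_isLinExt hM (rho_mono hr _)
  -- rank of the extra extension: `Q` at the bottom, maximal elements in the reverse of `L 0`
  let f : α → ℕ := fun x => if x ∈ Q then 0 else 1 + (Finset.univ.filter (fun y => L 0 x y)).card
  have hmax : ∀ x, x ∉ Q → ∀ y, r x y → y = x := by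
    intro x hx y hxy
    by_contra hne
    exact hx ((hmemQ x).2 ⟨y, hxy, hne⟩)
  have hf : ∀ x y, r x y → f x ≤ f y := by
    intro x y h
    by_cases hx : x ∈ Q
    · simp [f, hx]
    · rw [hmax x hx y h]
  have hL' : IsLinExt r (lexRel f M) := lexRel_isLinExt hM hf
  refine ⟨Fin.cons (lexRel f M) (fun i : Fin w => L i), ?_, ?_⟩
  · intro j
    refine Fin.cases ?_ (fun i => ?_) j
    · simpa using hL'
    · simpa using hL i
  · intro x y
    constructor
    · intro h j
      refine Fin.cases ?_ (fun i => ?_) j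
      · simpa using hL'.2 x y h
      · simpa using (hL i).2 x y h
    · intro h
      have h0 : lexRel f M x y := by simpa using h 0
      have hi : ∀ i (_ : i < w), L i x y := by
        intro i hi
        exact h (Fin.succ ⟨i, hi⟩)
      by_contra hxy
      have hne : x ≠ y := by rintro rfl; exact hxy (hr.refl x)
      by_cases hx : x ∈ Q
      · exact not_lexRel_of_lt (rho_lt hr (hC (c x)) (Finset.mem_filter.2 ⟨hx, rfl⟩) hxy)
          (hi (c x) (hcw x hx))
      · refine not_lexRel_of_lt ?_ h0
        by_cases hy : y ∈ Q
        · simp only [f, hx, hy, if_true, if_false]; omega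
        · simp only [f, hx, hy, if_false]
          have hlin := (hL 0).1
          have hxy0 := hi 0 hw0
          apply Nat.add_lt_add_left
          apply Finset.card_lt_card
          rw [Finset.ssubset_iff_of_subset]
          · refine ⟨x, by simpa using hlin.refl x, fun h => ?_⟩
            exact hne (hlin.antisymm _ _ hxy0 (Finset.mem_filter.1 h).2)
          · intro z hz
            have hz := (Finset.mem_filter.1 hz).2
            exact Finset.mem_filter.2 ⟨Finset.mem_univ _, hlin.trans _ _ _ hxy0 hz⟩
end

section
/- Let P be a finite poset, let A be an antichain in P such that P − A is nonempty, and let w be the width of the subposet of P induced on P − A. Then the dimension of P is at most 2w + 1. -/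
/-- **Dilworth's theorem**: if all antichains in `S` have at most `k` elements, then `S` is covered
by `k` chains, given as the colour classes of a `k`-colouring. The proof is Galvin's induction,
removing a maximal element `a` of `S`. -/
theorem dilworth_colouring {α : Type*} (r : α → α → Prop) (hr : IsPartialOrder α r)
    (S : Finset α) (k : ℕ)
    (hk : ∀ B : Finset α, IsAntichainIn r (↑S) B → B.card ≤ k) :
    ∃ c : α → ℕ, (∀ x ∈ S, c x < k) ∧
      ∀ x ∈ S, ∀ y ∈ S, c x = c y → r x y ∨ r y x := by
  classical
  have refl' : ∀ x, r x x := hr.refl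
  have trans' : ∀ x y z, r x y → r y z → r x z := hr.trans
  have anti' : ∀ x y, r x y → r y x → x = y := hr.antisymm
  induction S using Finset.strongInduction generalizing k with
  | H S ih =>
  rcases S.eq_empty_or_nonempty with rfl | hS
  · exact ⟨fun _ => 0, by simp, by simp⟩
  -- every nonempty finite set has a maximal element with respect to `r`
  have exmax : ∀ T : Finset α, T.Nonempty → ∃ a ∈ T, ∀ x ∈ T, r a x → x = a := by
    intro T hT
    let : PartialOrder α :=
      { le := r, le_refl := refl', le_trans := trans', le_antisymm := anti' }
    obtain ⟨a, ha⟩ := T.exists_maximal hT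
    exact ⟨a, ha.1, fun x hx hax => anti' _ _ (ha.2 hx hax) hax⟩
  obtain ⟨a, haS, hamax⟩ := exmax S hS
  have hk1 : 1 ≤ k := by
    have := hk {a} ⟨by simpa using haS, by
      intro x hx y hy hxy; simp at hx hy; exact absurd (hx.trans hy.symm) hxy⟩
    simpa using this
  -- colouring a chain `K ⊆ S` with one fresh colour
  have extendColour : ∀ K : Finset α, K ⊆ S → K.Nonempty →
      (∀ x ∈ K, ∀ y ∈ K, r x y ∨ r y x) →
      (∀ B : Finset α, IsAntichainIn r (↑(S \ K)) B → B.card ≤ k - 1) →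
      ∃ c : α → ℕ, (∀ x ∈ S, c x < k) ∧
        ∀ x ∈ S, ∀ y ∈ S, c x = c y → r x y ∨ r y x := by
    intro K hKS hK hKc hB
    obtain ⟨c, hc1, hc2⟩ := ih (S \ K) (Finset.sdiff_ssubset hKS hK) (k - 1) hB
    refine ⟨fun x => if x ∈ K then k - 1 else c x, ?_, ?_⟩
    · intro x hx
      have := hc1 x
      simp only [Finset.mem_sdiff] at this
      dsimp only
      split_ifs with h
      · omega
      · have := this ⟨hx, h⟩; omega
    · intro x hx y hy hxy
      have h1 := hc1 x
      have h2 := hc1 y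
      have h3 := hc2 x
      simp only [Finset.mem_sdiff] at h1 h2 h3
      dsimp only at hxy
      split_ifs at hxy with hx' hy' hy'
      · exact hKc x hx' y hy'
      · have := h2 ⟨hy, hy'⟩; omega
      · have := h1 ⟨hx, hx'⟩; omega
      · exact h3 ⟨hx, hx'⟩ y ⟨hy, hy'⟩ hxy
  have hsub : S.erase a ⊆ S := Finset.erase_subset _ _
  obtain ⟨c, hc1, hc2⟩ := ih (S.erase a) (Finset.erase_ssubset haS) k (fun B hB =>
    hk B ⟨hB.1.trans (by exact_mod_cast hsub), hB.2⟩)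
  by_cases hex : ∃ B : Finset α, IsAntichainIn r (↑(S.erase a)) B ∧ k ≤ B.card
  swap
  · apply extendColour {a} (by simpa using haS) (by simp)
    · intro x hx y hy
      simp at hx hy
      subst hx; subst hy; exact Or.inl (refl' _)
    · intro B hB
      rw [Finset.sdiff_singleton_eq_erase] at hB
      by_contra hcon
      exact hex ⟨B, hB, by omega⟩
  -- an antichain of size `k` in `S \ {a}` meets every colour class
  have meets : ∀ B : Finset α, IsAntichainIn r (↑(S.erase a)) B → k ≤ B.card →
      ∀ i < k, ∃ z ∈ B, c z = i := by
    intro B hB hBk i hi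
    have hBS : ∀ x ∈ B, x ∈ S.erase a := fun x hx => by exact_mod_cast hB.1 (by exact_mod_cast hx)
    have hinj : Set.InjOn c (↑B) := by
      intro x hx y hy hxy
      by_contra hne
      have := hB.2 x hx y hy hne
      rcases hc2 x (hBS x hx) y (hBS y hy) hxy with h | h
      · exact this.1 h
      · exact this.2 h
    have himg : B.image c = Finset.range k := by
      apply Finset.eq_of_subset_of_card_le
      · intro j hj
        obtain ⟨x, hx, rfl⟩ := Finset.mem_image.1 hj
        exact Finset.mem_range.2 (hc1 x (hBS x hx))
      · rw [Finset.card_image_of_injOn hinj, Finset.card_range]; exact hBk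
    have : i ∈ B.image c := by rw [himg]; exact Finset.mem_range.2 hi
    simpa using this
  obtain ⟨B₀, hB₀, hB₀k⟩ := hex
  -- `x i` is the top element of colour `i` that lies in some antichain of size `k`
  have hx : ∀ i, ∃ x, i < k → (x ∈ S.erase a ∧ c x = i ∧
      (∃ B : Finset α, IsAntichainIn r (↑(S.erase a)) B ∧ k ≤ B.card ∧ x ∈ B) ∧
      ∀ B : Finset α, IsAntichainIn r (↑(S.erase a)) B → k ≤ B.card →
        ∀ z ∈ B, c z = i → r z x) := by
    intro i
    by_cases hi : i < k
    swap
    · exact ⟨a, fun h => absurd h hi⟩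
    obtain ⟨x, hxT, hxm⟩ := exmax ((S.erase a).filter (fun z => c z = i ∧
      ∃ B : Finset α, IsAntichainIn r (↑(S.erase a)) B ∧ k ≤ B.card ∧ z ∈ B)) (by
        obtain ⟨z, hz, hzi⟩ := meets B₀ hB₀ hB₀k i hi
        exact ⟨z, Finset.mem_filter.2 ⟨by exact_mod_cast hB₀.1 (by exact_mod_cast hz),
          hzi, B₀, hB₀, hB₀k, hz⟩⟩)
    rw [Finset.mem_filter] at hxT
    refine ⟨x, fun _ => ⟨hxT.1, hxT.2.1, hxT.2.2, ?_⟩⟩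
    intro B hB hBk z hz hzi
    have hzS : z ∈ S.erase a := by exact_mod_cast hB.1 (by exact_mod_cast hz)
    rcases hc2 z hzS x hxT.1 (hzi.trans hxT.2.1.symm) with h | h
    · exact h
    · rw [hxm z (Finset.mem_filter.2 ⟨hzS, hzi, B, hB, hBk, hz⟩) h]; exact refl' _
  choose x hx using hx
  have hxanti : ∀ i < k, ∀ j < k, i ≠ j → ¬ r (x i) (x j) := by
    intro i hi j hj hij hle
    obtain ⟨-, -, -, htop⟩ := hx i hi
    obtain ⟨-, hcj, ⟨B, hB, hBk, hjB⟩, -⟩ := hx j hj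
    obtain ⟨z, hz, hzi⟩ := meets B hB hBk i hi
    refine (hB.2 z hz (x j) hjB ?_).1 (trans' _ _ _ (htop B hB hBk z hz hzi) hle)
    rintro rfl
    exact hij (hzi.symm.trans hcj)
  obtain ⟨i, hi, hia⟩ : ∃ i < k, r (x i) a := by
    by_contra! hcon
    -- otherwise `a` together with all `x i` would be an antichain of size `k + 1`
    have hxinj : Set.InjOn x (↑(Finset.range k)) := by
      intro i hi j hj hij
      have hi : i < k := by simpa using hi
      have hj : j < k := by simpa using hj
      rw [← (hx i hi).2.1, ← (hx j hj).2.1, hij]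
    have hanot : a ∉ (Finset.range k).image x := by
      intro h
      obtain ⟨i, hi, hia⟩ := Finset.mem_image.1 h
      exact hcon i (Finset.mem_range.1 hi) (by rw [hia]; exact refl' _)
    have hxmax : ∀ i < k, ¬ r a (x i) := by
      intro i hi h
      have h1 := (hx i hi).1
      rw [Finset.mem_erase] at h1
      exact h1.1 (hamax _ h1.2 h)
    have := hk (insert a ((Finset.range k).image x)) ⟨by
        intro y hy
        simp only [Finset.coe_insert, Finset.coe_image, Set.mem_insert_iff, Set.mem_image,
          Finset.mem_coe, Finset.mem_range] at hy
        rcases hy with rfl | ⟨i, hi, rfl⟩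
        · exact_mod_cast haS
        · exact_mod_cast hsub (hx i hi).1, by
        intro y hy z hz hyz
        simp only [Finset.mem_insert, Finset.mem_image, Finset.mem_range] at hy hz
        rcases hy with rfl | ⟨i, hi, rfl⟩ <;> rcases hz with rfl | ⟨j, hj, rfl⟩
        · exact absurd rfl hyz
        · exact ⟨hxmax j hj, hcon j hj⟩
        · exact ⟨hcon i hi, hxmax i hi⟩
        · have hij : i ≠ j := fun h => hyz (by rw [h])
          exact ⟨hxanti i hi j hj hij, hxanti j hj i hi hij.symm⟩⟩
    rw [Finset.card_insert_of_notMem hanot, Finset.card_image_of_injOn hxinj,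
      Finset.card_range] at this
    omega
  obtain ⟨hxiS, hci, -, htop⟩ := hx i hi
  -- remove the chain formed by `a` and the elements of colour `i` below `x i`
  apply extendColour (insert a ((S.erase a).filter (fun z => c z = i ∧ r z (x i))))
  · intro y hy
    rw [Finset.mem_insert, Finset.mem_filter] at hy
    rcases hy with rfl | hy
    · exact haS
    · exact hsub hy.1
  · exact Finset.insert_nonempty _ _
  · intro y hy z hz
    rw [Finset.mem_insert, Finset.mem_filter] at hy hz
    rcases hy with rfl | ⟨hyS, hyi, hy⟩ <;> rcases hz with rfl | ⟨hzS, hzi, hz⟩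
    · exact Or.inl (refl' _)
    · exact Or.inr (trans' _ _ _ hz hia)
    · exact Or.inl (trans' _ _ _ hy hia)
    · exact hc2 y hyS z hzS (hyi.trans hzi.symm)
  · intro B hB
    by_contra hcon
    have hBk : k ≤ B.card := by omega
    have hmem : ∀ z ∈ B, z ∈ S ∧ z ≠ a ∧
        z ∉ (S.erase a).filter (fun z => c z = i ∧ r z (x i)) := by
      intro z hz
      have := hB.1 (by exact_mod_cast hz : z ∈ (↑B : Set α))
      rw [Finset.mem_coe, Finset.mem_sdiff, Finset.mem_insert, not_or] at this
      exact this
    have hB' : IsAntichainIn r (↑(S.erase a)) B :=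
      ⟨fun z hz => by
        have := hmem z hz
        exact_mod_cast Finset.mem_erase.2 ⟨this.2.1, this.1⟩, hB.2⟩
    obtain ⟨z, hz, hzi⟩ := meets B hB' hBk i hi
    obtain ⟨h1, h2, h3⟩ := hmem z hz
    exact h3 (Finset.mem_filter.2 ⟨Finset.mem_erase.2 ⟨h2, h1⟩, hzi, htop B hB' hBk z hz hzi⟩)

/-- For a chain `C`, some linear extension places every `c ∈ C` above all `x` incomparable to `c`.
It extends the partial order which first compares `x` and `y` by the initial segments of `C` below
them, and then by `r`. -/
theorem exists_linExt_chain_up {α : Type*} (r : α → α → Prop) (hr : IsPartialOrder α r)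
    (C : Set α) (hC : ∀ x ∈ C, ∀ y ∈ C, r x y ∨ r y x) :
    ∃ L, IsLinExt r L ∧ ∀ c ∈ C, ∀ x, ¬ r c x → L x c := by
  have refl' : ∀ x, r x x := hr.refl
  have trans' : ∀ x y z, r x y → r y z → r x z := hr.trans
  have anti' : ∀ x y, r x y → r y x → x = y := hr.antisymm
  let s : α → α → Prop := fun x y => r x y ∨ ∃ c ∈ C, r c y ∧ ¬ r c x
  have hs : IsPartialOrder α s :=
    { refl := fun x => Or.inl (refl' x)
      trans := by
        rintro x y z (h | ⟨c, hc, h1, h2⟩) (h' | ⟨d, hd, h3, h4⟩)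
        · exact Or.inl (trans' _ _ _ h h')
        · exact Or.inr ⟨d, hd, h3, fun h5 => h4 (trans' _ _ _ h5 h)⟩
        · exact Or.inr ⟨c, hc, trans' _ _ _ h1 h', h2⟩
        · rcases hC c hc d hd with hcd | hdc
          · exact Or.inr ⟨c, hc, trans' _ _ _ hcd h3, h2⟩
          · exact absurd (trans' _ _ _ hdc h1) h4
      antisymm := by
        rintro x y (h | ⟨c, hc, h1, h2⟩) (h' | ⟨d, hd, h3, h4⟩)
        · exact anti' _ _ h h'
        · exact absurd (trans' _ _ _ h3 h) h4
        · exact absurd (trans' _ _ _ h1 h') h2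
        · rcases hC c hc d hd with hcd | hdc
          · exact absurd (trans' _ _ _ hcd h3) h2
          · exact absurd (trans' _ _ _ hdc h1) h4 }
  obtain ⟨L, hL, hsL⟩ := extend_partialOrder s
  exact ⟨L, ⟨hL, fun x y h => hsL x y (Or.inl h)⟩,
    fun c hc x h => hsL x c (Or.inr ⟨c, hc, refl' c, h⟩)⟩

theorem isLinearOrder_flip {α : Type*} {L : α → α → Prop} (hL : IsLinearOrder α L) :
    IsLinearOrder α (fun x y => L y x) :=
  { refl := hL.refl
    trans := fun x y z h1 h2 => hL.trans z y x h2 h1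
    antisymm := fun x y h1 h2 => hL.antisymm x y h2 h1
    total := fun x y => hL.total y x }

theorem exists_linExt_chain_down {α : Type*} (r : α → α → Prop) (hr : IsPartialOrder α r)
    (C : Set α) (hC : ∀ x ∈ C, ∀ y ∈ C, r x y ∨ r y x) :
    ∃ L, IsLinExt r L ∧ ∀ c ∈ C, ∀ x, ¬ r x c → L c x := by
  have hr' : IsPartialOrder α (fun x y => r y x) :=
    { refl := hr.refl
      trans := fun x y z h1 h2 => hr.trans z y x h2 h1
      antisymm := fun x y h1 h2 => hr.antisymm x y h2 h1 }
  obtain ⟨L, ⟨hL, hrL⟩, h⟩ := exists_linExt_chain_up _ hr' C (fun x hx y hy => hC y hy x hx)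
  exact ⟨fun x y => L y x, ⟨isLinearOrder_flip hL, fun x y hxy => hrL y x hxy⟩, h⟩

/-- Any linear order `T` on an antichain `A` is induced by a linear extension. -/
theorem exists_linExt_antichain {α : Type*} (r : α → α → Prop) (hr : IsPartialOrder α r)
    (A : Set α) (hA : ∀ x ∈ A, ∀ y ∈ A, x ≠ y → ¬ r x y ∧ ¬ r y x)
    (T : α → α → Prop) (hT : IsLinearOrder α T) :
    ∃ L, IsLinExt r L ∧ ∀ x ∈ A, ∀ y ∈ A, T x y → L x y := by
  have refl' : ∀ x, r x x := hr.refl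
  have trans' : ∀ x y z, r x y → r y z → r x z := hr.trans
  have anti' : ∀ x y, r x y → r y x → x = y := hr.antisymm
  have hA' : ∀ x ∈ A, ∀ y ∈ A, r x y → x = y := fun x hx y hy h => by
    by_contra hne
    exact (hA x hx y hy hne).1 h
  let s : α → α → Prop := fun x y => r x y ∨ ∃ a ∈ A, ∃ b ∈ A, T a b ∧ r x a ∧ r b y
  have hs : IsPartialOrder α s :=
    { refl := fun x => Or.inl (refl' x)
      trans := by
        rintro x y z (h | ⟨a, ha, b, hb, hab, h1, h2⟩) (h' | ⟨c, hc, d, hd, hcd, h3, h4⟩)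
        · exact Or.inl (trans' _ _ _ h h')
        · exact Or.inr ⟨c, hc, d, hd, hcd, trans' _ _ _ h h3, h4⟩
        · exact Or.inr ⟨a, ha, b, hb, hab, h1, trans' _ _ _ h2 h'⟩
        · obtain rfl := hA' b hb c hc (trans' _ _ _ h2 h3)
          exact Or.inr ⟨a, ha, d, hd, hT.trans _ _ _ hab hcd, h1, h4⟩
      antisymm := by
        rintro x y (h | ⟨a, ha, b, hb, hab, h1, h2⟩) (h' | ⟨c, hc, d, hd, hcd, h3, h4⟩)
        · exact anti' _ _ h h'
        · obtain rfl := hA' d hd c hc (trans' _ _ _ h4 (trans' _ _ _ h h3))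
          exact anti' _ _ h (trans' _ _ _ h3 h4)
        · obtain rfl := hA' b hb a ha (trans' _ _ _ h2 (trans' _ _ _ h' h1))
          exact anti' _ _ (trans' _ _ _ h1 h2) h'
        · obtain rfl := hA' b hb c hc (trans' _ _ _ h2 h3)
          obtain rfl := hA' d hd a ha (trans' _ _ _ h4 h1)
          obtain rfl := hT.antisymm _ _ hab hcd
          exact anti' _ _ (trans' _ _ _ h1 h2) (trans' _ _ _ h3 h4) }
  obtain ⟨L, hL, hsL⟩ := extend_partialOrder s
  exact ⟨L, ⟨hL, fun x y h => hsL x y (Or.inl h)⟩,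
    fun x hx y hy h => hsL x y (Or.inr ⟨x, hx, y, hy, h, refl' x, refl' y⟩)⟩

/-- If `A` is an antichain in a finite poset `P` with `P - A` nonempty and `w`
is the width of the subposet induced on `P - A`, then the dimension of `P` is
at most `2w + 1`. -/
theorem dim_le_two_mul_width_add_one {α : Type*} [Fintype α]
    (r : α → α → Prop) (hr : IsPartialOrder α r) (A : Set α)
    (hA : ∀ x ∈ A, ∀ y ∈ A, x ≠ y → ¬ r x y ∧ ¬ r y x)
    (hne : (Set.univ \ A).Nonempty)
    (w : ℕ) (hw : IsWidthOn r (Set.univ \ A) w) :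
    HasDimLE r (2 * w + 1) := by
  classical
  have hS : (↑(Finset.univ.filter (fun x => x ∉ A)) : Set α) = Set.univ \ A := by
    ext x; simp
  obtain ⟨c, hc1, hc2⟩ := dilworth_colouring r hr (Finset.univ.filter (fun x => x ∉ A)) w
    (fun B hB => hw.2 ⟨B, by rwa [hS] at hB, rfl⟩)
  simp only [Finset.mem_filter, Finset.mem_univ, true_and] at hc1 hc2
  have hchain : ∀ i : ℕ, ∀ x ∈ {x | x ∉ A ∧ c x = i}, ∀ y ∈ {x | x ∉ A ∧ c x = i},
      r x y ∨ r y x := fun i x hx y hy => hc2 x hx.1 y hy.1 (hx.2.trans hy.2.symm)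
  choose U hUext hU using fun i => exists_linExt_chain_up r hr _ (hchain i)
  choose D hDext hD using fun i => exists_linExt_chain_down r hr _ (hchain i)
  obtain ⟨N, hNext, hN⟩ := exists_linExt_antichain r hr A hA _ (isLinearOrder_flip (hUext 0).1)
  have hw0 : 0 < w := by
    obtain ⟨p, hp⟩ := hne
    exact lt_of_le_of_lt (Nat.zero_le _) (hc1 p hp.2)
  -- positions `0, …, w - 1` hold `U`, positions `w, …, 2w - 1` hold `D`, and `2w` holds `N`
  refine ⟨fun j => if j.1 < w then U j.1 else if j.1 < 2 * w then D (j.1 - w) else N, ?_, ?_⟩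
  · intro j
    dsimp only
    split_ifs
    · exact hUext _
    · exact hDext _
    · exact hNext
  · intro x y
    constructor
    · intro h j
      split_ifs
      · exact (hUext _).2 x y h
      · exact (hDext _).2 x y h
      · exact hNext.2 x y h
    · intro h
      have hUxy : ∀ i < w, U i x y := fun i hi => by
        simpa [hi] using h ⟨i, by omega⟩
      have hDxy : ∀ i < w, D i x y := fun i hi => by
        have h1 : w + i < 2 * w := by omega
        simpa [h1] using h ⟨w + i, by omega⟩
      have hNxy : N x y := by
        have h1 : ¬ 2 * w < w := by omega
        simpa [h1] using h ⟨2 * w, by omega⟩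
      by_contra hxy
      have hxy' : x ≠ y := fun e => hxy (e ▸ hr.refl x)
      by_cases hx : x ∈ A
      · by_cases hy : y ∈ A
        -- `N` reverses `U 0` on `A`
        · have := hN y hy x hx (hUxy 0 hw0)
          exact hxy' (hNext.1.antisymm _ _ hNxy this)
        · have := hD (c y) y ⟨hy, rfl⟩ x hxy
          exact hxy' ((hDext _).1.antisymm _ _ (hDxy _ (hc1 y hy)) this)
      · have := hU (c x) x ⟨hx, rfl⟩ y hxy
        exact hxy' ((hUext _).1.antisymm _ _ (hUxy _ (hc1 x hx)) this)
end

section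
/- For n ≥ 1, let D_n be the poset with 3n + 1 elements x, a_1,…,a_n, b_1,…,b_n, c_1,…,c_n and strict order relations: a_i < x for all i; x < c_j for all j; a_i < c_j for all i, j; a_i < b_i and b_i < c_i for each i; and no other strict relations. Then for every n ≥ 17, the dimension of D_n is exactly 4: D_n has a realizer of size 4 but no realizer of size 3. -/
/-- The strict order relations of the poset `D_n`: the element `x` is `none`,
and `some (l, i)` is `a_i`, `b_i`, `c_i` for `l = 0, 1, 2` respectively.
The relations are `a_i < x`, `x < c_j`, `a_i < c_j`, `a_i < b_i`, `b_i < c_i`,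
and no others. -/
def Dstrict (n : ℕ) : Option (Fin 3 × Fin n) → Option (Fin 3 × Fin n) → Prop
  | some p, none => p.1 = 0
  | none, some q => q.1 = 2
  | some p, some q =>
      (p.1 = 0 ∧ q.1 = 2) ∨ (p.1 = 0 ∧ q.1 = 1 ∧ p.2 = q.2) ∨
        (p.1 = 1 ∧ q.1 = 2 ∧ p.2 = q.2)
  | none, none => False

/-- The order relation of the poset `D_n` (reflexive closure of `Dstrict`). -/
def Drel (n : ℕ) (u v : Option (Fin 3 × Fin n)) : Prop :=
  u = v ∨ Dstrict n u v

/-- Integer positions describing four linear extensions of `D_n`; `x` is at `0` in each. The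
extensions `0` and `1` have `b_i` immediately below `c_i`, above `x`; the extensions `2` and `3`
have `b_i` immediately above `a_i`, below `x`. These pairs are ordered by
increasing `i` in `0`, `2` and by decreasing `i` in `1`, `3`. -/
def diamondKey (n : ℕ) : Fin 4 → Option (Fin 3 × Fin n) → ℤ
  | _, none => 0
  | 0, some (0, i) => -(i : ℤ) - 1
  | 0, some (1, i) => 2 * i + 1
  | 0, some (2, i) => 2 * i + 2
  | 1, some (0, i) => -(i : ℤ) - 1
  | 1, some (1, i) => 2 * (n - i)
  | 1, some (2, i) => 2 * (n - i) + 1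
  | 2, some (0, i) => 2 * i - 2 * n
  | 2, some (1, i) => 2 * i - 2 * n + 1
  | 2, some (2, i) => i + 1
  | 3, some (0, i) => -2 * i - 2
  | 3, some (1, i) => -2 * i - 1
  | 3, some (2, i) => i + 1

lemma diamondKey_injective (n : ℕ) (j : Fin 4) : Function.Injective (diamondKey n j) := by
  rintro (_ | ⟨p, i, hi⟩) (_ | ⟨q, k, hk⟩) h
  · rfl
  · fin_cases j <;> fin_cases q <;> simp [diamondKey] at h <;> omega
  · fin_cases j <;> fin_cases p <;> simp [diamondKey] at h <;> omega
  · fin_cases j <;> fin_cases p <;> fin_cases q <;> simp [diamondKey] at h ⊢ <;> omega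

lemma drel_iff_diamondKey (n : ℕ) (u v : Option (Fin 3 × Fin n)) :
    Drel n u v ↔ ∀ j, diamondKey n j u ≤ diamondKey n j v := by
  rcases u with _ | ⟨p, i, hi⟩ <;> rcases v with _ | ⟨q, k, hk⟩
  · simp [Drel, diamondKey]
  · fin_cases q <;> simp [Drel, Dstrict, diamondKey, Fin.forall_fin_succ] <;> omega
  · fin_cases p <;> simp [Drel, Dstrict, diamondKey, Fin.forall_fin_succ] <;> omega
  · fin_cases p <;> fin_cases q <;>
      simp [Drel, Dstrict, diamondKey, Fin.forall_fin_succ] <;> omega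

lemma drel_isPartialOrder (n : ℕ) : IsPartialOrder (Option (Fin 3 × Fin n)) (Drel n) where
  refl _ := Or.inl rfl
  trans u v w h₁ h₂ := by
    rw [drel_iff_diamondKey] at *
    exact fun j => (h₁ j).trans (h₂ j)
  antisymm u v h₁ h₂ := by
    rw [drel_iff_diamondKey] at *
    exact diamondKey_injective n 0 ((h₁ 0).antisymm (h₂ 0))

lemma hasDimLE_four (n : ℕ) : HasDimLE (Drel n) 4 := by
  refine ⟨fun j u v => diamondKey n j u ≤ diamondKey n j v, fun j => ⟨?_, ?_⟩,
    drel_iff_diamondKey n⟩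
  · exact
      { refl := fun _ => le_rfl
        trans := fun _ _ _ => le_trans
        antisymm := fun _ _ h₁ h₂ => diamondKey_injective n j (h₁.antisymm h₂)
        total := fun _ _ => le_total _ _ }
  · exact fun u v h => (drel_iff_diamondKey n u v).1 h j

section LowerBound

variable {n : ℕ} {L : Option (Fin 3 × Fin n) → Option (Fin 3 × Fin n) → Prop}

/-- If `a_i` lies above `b_j` in a linear extension, then so does `x`. -/
lemma IsLinExt.below_of_not (hL : IsLinExt (Drel n) L) {i j : Fin n}
    (h : ¬ L (some (0, i)) (some (1, j))) : ¬ L none (some (1, j)) := by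
  have := hL.1
  exact fun hx => h (_root_.trans (hL.2 _ _ (Or.inr (by simp [Dstrict]))) hx)

/-- If `b_j` lies above `c_k` in a linear extension, then it lies above `x`. -/
lemma IsLinExt.above_of_not (hL : IsLinExt (Drel n) L) {j k : Fin n}
    (h : ¬ L (some (1, j)) (some (2, k))) : L none (some (1, j)) := by
  have := hL.1
  have h₁ := (total_of L (some (1, j)) (some (2, k))).resolve_left h
  exact _root_.trans (hL.2 _ _ (Or.inr (by simp [Dstrict]))) h₁

/-- `b_j > c_k` and `b_k > c_j` cannot both hold in a linear extension. -/
lemma IsLinExt.not_both_above (hL : IsLinExt (Drel n) L) {j k : Fin n}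
    (h₁ : ¬ L (some (1, j)) (some (2, k))) (h₂ : ¬ L (some (1, k)) (some (2, j))) : False := by
  have := hL.1
  have h₃ := (total_of L (some (1, j)) (some (2, k))).resolve_left h₁
  have h₄ : L (some (1, k)) (some (2, k)) := hL.2 _ _ (Or.inr (by simp [Dstrict]))
  have h₅ : L (some (1, j)) (some (2, j)) := hL.2 _ _ (Or.inr (by simp [Dstrict]))
  exact h₂ (_root_.trans h₄ (_root_.trans h₃ h₅))

/-- `a_j > b_k` and `a_k > b_j` cannot both hold in a linear extension. -/
lemma IsLinExt.not_both_below (hL : IsLinExt (Drel n) L) {j k : Fin n}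
    (h₁ : ¬ L (some (0, j)) (some (1, k))) (h₂ : ¬ L (some (0, k)) (some (1, j))) : False := by
  have := hL.1
  have h₃ := (total_of L (some (0, j)) (some (1, k))).resolve_left h₁
  have h₄ : L (some (0, k)) (some (1, k)) := hL.2 _ _ (Or.inr (by simp [Dstrict]))
  have h₅ : L (some (0, j)) (some (1, j)) := hL.2 _ _ (Or.inr (by simp [Dstrict]))
  exact h₂ (_root_.trans h₄ (_root_.trans h₃ h₅))

end LowerBound

/-- The sign vectors of the `b_j` with respect to `x` are pairwise distinct in a realizer of
size `3`. -/
lemma sign_injective {n : ℕ} {Ls : Fin 3 → Option (Fin 3 × Fin n) → Option (Fin 3 × Fin n) → Prop}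
    (h : IsRealizer (Drel n) Ls) :
    Function.Injective fun (j : Fin n) (t : Fin 3) => Ls t none (some (1, j)) := by
  intro j k hjk
  by_contra hne
  have hs : ∀ t, Ls t none (some (1, j)) ↔ Ls t none (some (1, k)) :=
    fun t => iff_of_eq (congrFun hjk t)
  -- each of the four incomparable pairs is reversed in one of the extensions
  obtain ⟨t₁, h₁⟩ : ∃ t, ¬ Ls t (some (1, j)) (some (2, k)) := by
    rw [← not_forall, ← h.2]; simp [Drel, Dstrict, hne]
  obtain ⟨t₂, h₂⟩ : ∃ t, ¬ Ls t (some (1, k)) (some (2, j)) := by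
    rw [← not_forall, ← h.2]; simp [Drel, Dstrict, Ne.symm hne]
  obtain ⟨t₃, h₃⟩ : ∃ t, ¬ Ls t (some (0, j)) (some (1, k)) := by
    rw [← not_forall, ← h.2]; simp [Drel, Dstrict, hne]
  obtain ⟨t₄, h₄⟩ : ∃ t, ¬ Ls t (some (0, k)) (some (1, j)) := by
    rw [← not_forall, ← h.2]; simp [Drel, Dstrict, Ne.symm hne]
  have a₁ := (h.1 t₁).above_of_not h₁
  have a₂ := (hs t₂).2 ((h.1 t₂).above_of_not h₂)
  have a₃ := mt (hs t₃).1 ((h.1 t₃).below_of_not h₃)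
  have a₄ := (h.1 t₄).below_of_not h₄
  have h₁₂ : t₁ ≠ t₂ := by rintro rfl; exact (h.1 _).not_both_above h₁ h₂
  have h₃₄ : t₃ ≠ t₄ := by rintro rfl; exact (h.1 _).not_both_below h₃ h₄
  have h₁₃ : t₁ ≠ t₃ := by rintro rfl; exact a₃ a₁
  have h₁₄ : t₁ ≠ t₄ := by rintro rfl; exact a₄ a₁
  have h₂₃ : t₂ ≠ t₃ := by rintro rfl; exact a₃ a₂
  have h₂₄ : t₂ ≠ t₄ := by rintro rfl; exact a₄ a₂
  -- four distinct indices among three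
  omega

/-- For every `n ≥ 17`, `D_n` is a poset of dimension exactly `4`:
it has a realizer of size `4` but none of size `3`. -/
theorem diamonds_poset_dim_four (n : ℕ) (hn : 17 ≤ n) :
    IsPartialOrder (Option (Fin 3 × Fin n)) (Drel n) ∧
      HasDimLE (Drel n) 4 ∧ ¬ HasDimLE (Drel n) 3 := by
  refine ⟨drel_isPartialOrder n, hasDimLE_four n, ?_⟩
  rintro ⟨Ls, h⟩
  have hcard := Fintype.card_le_of_injective _ (sign_injective h)
  simp at hcard
  omega
end

section
/- Fix an integer d ≥ 2. For d ≥ 2 and n ≥ 2, define the poset P(n,d) as follows: start with the base poset W = (Fin n)^d (d-tuples with entries in {0,…,n−1}, ordered coordinatewise), and for each w ∈ W adjoin three new elements x_w, y_w, z_w; the order of P(n,d) is the partial order generated by the order on W together with the relations x_w < y_w, y_w < z_w, x_w < w, and w < z_w for each w ∈ W. Then there exists n_0 such that for all n ≥ n_0, the poset P(n,d) has no realizer of size d + 1; equivalently, the dimension of P(n,d) is at least d + 2. -/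
/-- The order relation of the poset `P(n,d)`.  The ground set consists of pairs
`(w, l)` with `w ∈ (Fin n)^d`: `(w, 0)` is the element `w` of the base poset
`W = (Fin n)^d` (ordered coordinatewise), and `(w, 1), (w, 2), (w, 3)` are the
attached elements `x_w, y_w, z_w`.  The order is the partial order generated by
the order on `W` together with `x_w < y_w < z_w`, `x_w < w` and `w < z_w`;
explicitly, besides reflexivity: `(u,0) ≤ (w,0)`, `(u,0) ≤ z_w`, `x_u ≤ (w,0)`
and `x_u ≤ z_w` each hold iff `u ≤ w` coordinatewise, while `x_u ≤ y_w` and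
`y_u ≤ z_w` hold iff `u = w`. -/
def Prel (n d : ℕ) (p q : (Fin d → Fin n) × Fin 4) : Prop :=
  p = q ∨
    (p.2 = 0 ∧ q.2 = 0 ∧ ∀ i, p.1 i ≤ q.1 i) ∨
    (p.2 = 0 ∧ q.2 = 3 ∧ ∀ i, p.1 i ≤ q.1 i) ∨
    (p.2 = 1 ∧ q.2 = 0 ∧ ∀ i, p.1 i ≤ q.1 i) ∨
    (p.2 = 1 ∧ q.2 = 3 ∧ ∀ i, p.1 i ≤ q.1 i) ∨
    (p.2 = 1 ∧ q.2 = 2 ∧ p.1 = q.1) ∨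
    (p.2 = 2 ∧ q.2 = 3 ∧ p.1 = q.1)

/-- For large `n`, every finite colouring of the grid `(Fin n)^d` admits a monochromatic
order-embedded copy of the cube `{0,1}^d` that respects the coordinates. The copy is the image of
a Hales–Jewett line over the alphabet `{0,1}^d` under summation of the letters of a word. -/
lemma exists_mono_cube (d : ℕ) (κ : Type) [Finite κ] :
    ∃ n₀ : ℕ, 0 < n₀ ∧ ∀ n : ℕ, n₀ ≤ n → ∀ C : (Fin d → Fin n) → κ,
      ∃ (g : (Fin d → Fin 2) → (Fin d → Fin n)) (col : κ), (∀ a, C (g a) = col) ∧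
        (∀ a b, (∀ c, a c ≤ b c) → ∀ c, g a c ≤ g b c) ∧
        (∀ a b c, a c < b c → g a c < g b c) := by
  obtain ⟨ι, _, hι⟩ := Combinatorics.Line.exists_mono_in_high_dimension (Fin d → Fin 2) κ
  refine ⟨Fintype.card ι + 1, by omega, fun n hn C => ?_⟩
  have hlt : ∀ (f : ι → Fin d → Fin 2) (c : Fin d), ∑ s, (f s c : ℕ) < n := by
    intro f c
    have : ∑ s, (f s c : ℕ) ≤ ∑ _s : ι, 1 := Finset.sum_le_sum fun s _ => by omega
    simp at this
    omega
  let φ : (ι → Fin d → Fin 2) → (Fin d → Fin n) := fun f c => ⟨∑ s, (f s c : ℕ), hlt f c⟩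
  obtain ⟨l, col, hl⟩ := hι (fun f => C (φ f))
  have hle : ∀ a b : Fin d → Fin 2, ∀ c, a c ≤ b c → ∀ s, (l a s c : ℕ) ≤ l b s c := by
    intro a b c h s
    rw [Combinatorics.Line.apply_def, Combinatorics.Line.apply_def]
    cases hs : l.idxFun s with
    | none => simpa [hs] using h
    | some v => simp [hs]
  refine ⟨fun a => φ (l a), col, hl, fun a b h c => ?_, fun a b c h => ?_⟩
  · exact Finset.sum_le_sum fun s _ => hle a b c (h c) s
  · obtain ⟨s, hs⟩ := l.proper
    refine Finset.sum_lt_sum (fun s _ => hle a b c h.le s) ⟨s, Finset.mem_univ _, ?_⟩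
    rw [Combinatorics.Line.apply_none _ _ _ hs, Combinatorics.Line.apply_none _ _ _ hs]
    exact h

/-- For every fixed `d ≥ 2` there is `n₀` such that for all `n ≥ n₀` the poset
`P(n,d)` has no realizer of size `d + 1`; hence its dimension is at
least `d + 2`. -/
theorem lower_bound_construction (d : ℕ) (hd : 2 ≤ d) :
    ∃ n₀ : ℕ, ∀ n : ℕ, n₀ ≤ n → ¬ HasDimLE (Prel n d) (d + 1) := by
  obtain ⟨n₀, hpos, hcube⟩ := exists_mono_cube d (Fin (d + 1) × Fin (d + 1))
  refine ⟨n₀, fun n hn => ?_⟩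
  rintro ⟨L, hext, hreal⟩
  have tr : ∀ k {p q r}, L k p q → L k q r → L k p r := fun k p q r h h' =>
    (hext k).1.toIsPartialOrder.toIsPreorder.toIsTrans.trans _ _ _ h h'
  have total : ∀ k p q, ¬ L k p q → L k q p := fun k p q h =>
    ((hext k).1.toTotal.total p q).resolve_left h
  have ext : ∀ k {p q}, Prel n d p q → L k p q := fun k p q h => (hext k).2 p q h
  have hn0 : 0 < n := by omega
  let B : Fin d → Fin n := fun _ => ⟨0, hn0⟩
  let T : Fin d → Fin n := fun _ => ⟨n - 1, by omega⟩
  have hB : ∀ (w : Fin d → Fin n) c, B c ≤ w c := fun w c => Nat.zero_le _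
  have hT : ∀ (w : Fin d → Fin n) c, w c ≤ T c := fun w c => Nat.le_sub_one_of_lt (w c).2
  have hi : ∀ w, ∃ k, ¬ L k (B, 0) (w, 2) := fun w => by
    rw [← not_forall, ← hreal]
    simp [Prel]
  have hj : ∀ w, ∃ k, ¬ L k (w, 2) (T, 0) := fun w => by
    rw [← not_forall, ← hreal]
    simp [Prel]
  choose fi hfi using hi
  choose fj hfj using hj
  have hne : ∀ w, fi w ≠ fj w := by
    intro w h
    refine hfi w (tr _ (ext _ ?_) (h ▸ total _ _ _ (hfj w)))
    exact Or.inr (Or.inl ⟨rfl, rfl, hB T⟩)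
  obtain ⟨g, ⟨i, j⟩, hcol, hmono, hstrict⟩ := hcube n hn (fun w => (fi w, fj w))
  have hgi : ∀ a, fi (g a) = i := fun a => congrArg Prod.fst (hcol a)
  have hgj : ∀ a, fj (g a) = j := fun a => congrArg Prod.snd (hcol a)
  have hij : i ≠ j := by
    have := hne (g 0)
    rwa [hgi, hgj] at this
  let e : Fin d → Fin d → Fin 2 := fun c c' => if c' = c then 1 else 0
  let a : Fin d → Fin d → Fin 2 := fun c c' => if c' = c then 0 else 1
  have hk : ∀ c, ∃ k, ¬ L k (g (e c), 1) (g (a c), 3) := fun c => by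
    rw [← not_forall, ← hreal]
    have : g (a c) c < g (e c) c := hstrict _ _ _ (by simp [e, a])
    simpa [Prel] using ⟨c, this⟩
  choose fk hfk using hk
  have hki : ∀ c, fk c ≠ i := by
    intro c h
    refine hfk c ?_
    rw [h]
    have h1 := total _ _ _ (hfi (g (e c)))
    rw [hgi] at h1
    exact tr i (tr i (ext i (by simp [Prel])) h1)
      (ext i (Or.inr (Or.inr (Or.inl ⟨rfl, rfl, hB _⟩))))
  have hkj : ∀ c, fk c ≠ j := by
    intro c h
    refine hfk c ?_
    rw [h]
    have h1 := total _ _ _ (hfj (g (a c)))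
    rw [hgj] at h1
    exact tr j (tr j (ext j (Or.inr (Or.inr (Or.inr (Or.inl ⟨rfl, rfl, hT _⟩))))) h1)
      (ext j (by simp [Prel]))
  obtain ⟨c, -, c', -, hcc, hkk⟩ := Finset.exists_ne_map_eq_of_card_lt_of_maps_to
    (s := (Finset.univ : Finset (Fin d))) (t := (Finset.univ.erase i).erase j) (f := fk)
    (by
      rw [Finset.card_erase_of_mem (by simp [hij.symm]), Finset.card_erase_of_mem (by simp)]
      simp
      omega)
    (fun c _ => by simp [hki c, hkj c])
  have cross : ∀ c c', c ≠ c' → ∀ k, L k (g (e c), 1) (g (a c'), 3) := by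
    intro c c' h k
    refine ext k (Or.inr (Or.inr (Or.inr (Or.inr (Or.inl ⟨rfl, rfl, hmono _ _ fun s => ?_⟩)))))
    by_cases h1 : s = c
    · subst h1
      simp [e, a, h]
    · simp [e, h1]
  -- In `L (fk c)`: x at atom `c` ≤ z at coatom `c'` ≤ x at atom `c'` ≤ z at coatom `c`.
  have h' := total _ _ _ (hfk c')
  rw [← hkk] at h'
  exact hfk c (tr _ (tr _ (cross c c' hcc _) h') (cross c' c hcc.symm _))
end
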